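/- arXiv:2511.02705 — 2 statements merged into one kernel-verified Lean document; each statement's English description precedes it below -/
import Mathlib

section
/- Let G be a consistent-form ConstrainedCC instance, 𝒟 a maximal edge-disjoint set of dangerous pairs, (X⁺, X⁻) a feasible solution of the constrained covering LP with induced edge values x, and Ĝ the auxiliary graph. If abc is a bad triangle of Ĝ (ab, bc ∈ Ê⁺ and ac ∈ Ê⁻, with a, b, c distinct), then S(a), S(b), S(c) are pairwise distinct. Moreover, if additionally ac ∉ E^b (a type-A bad triangle), then 𝟙(ab ∈ E⁺) + 𝟙(bc ∈ E⁺) + 𝟙(ac ∈ E⁻) ≤ 3 · (x_{ab} + x_{bc} + x_{ac}). -/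
/-!
Membership in `Ê⁺` depends only on the supernodes of the two (distinct) endpoints, so two
vertices of a common supernode see every third vertex with the same sign. A bad triangle
therefore meets three distinct supernodes `A, B, C`.

For the inequality, write `p` and `n` for the values of `X⁺` and `X⁻`. The pairs `ab`, `bc` satisfy
`p < n` and `p + n ≥ 1`, hence `p ≤ x`, and `x > 1/2` on those that are negative in `G`.
* If `ac ∈ E⁻`, the covering constraint `p_ab + p_bc + n_ac ≥ 1` gives `x_ab + x_bc + x_ac ≥ 1`.
* If `ac ∈ E⁺` and one of `ab`, `bc` lies in `E⁻`, that pair alone contributes more than `1/2`,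
  while the left-hand side is at most `1`.
* If all three pairs are positive in `G`, it suffices that the sum is at least `2/3`. This is clear
  if `p_ac ≥ 2/3`, and if `p_ac ≥ n_ac` it follows from the covering constraint. Otherwise `ac` is in
  `Ê⁻` only because every positive edge between `A` and `C` lies in `E_𝒟`; since `ac` is not balanced,
  its partner `f` is in `Ê⁺`. The ends of the path formed by `ac` and `f` lie in hostile
  supernodes, where `X⁻ = 0`, so the covering constraint forces `p_ac + p_f ≥ 1`
  (`one_le_add_of_dangerous`). The HEAP constraint gives `p_ab + p_bc + p_f ≥ 1`, and
  `p_f < 2/3`, so `p_ab + p_bc + p_ac ≥ 2 - 2 p_f > 2/3`.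
-/

open scoped Classical

namespace CCC

/-- A Constrained Correlation Clustering instance: a partition of the unordered
pairs of distinct vertices into positive edges `Ep` and negative edges `En`,
together with friendly constraints `F` and hostile constraints `H`. -/
structure CCInst (V : Type*) where
  Ep : Finset (Sym2 V)
  En : Finset (Sym2 V)
  F : Finset (Sym2 V)
  H : Finset (Sym2 V)
  mem_Ep_iff : ∀ e : Sym2 V, e ∈ Ep ↔ (¬ e.IsDiag ∧ e ∉ En)
  not_isDiag_of_mem_En : ∀ e ∈ En, ¬ e.IsDiag
  not_isDiag_of_mem_F : ∀ e ∈ F, ¬ e.IsDiag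
  not_isDiag_of_mem_H : ∀ e ∈ H, ¬ e.IsDiag

variable {V : Type*} [Fintype V] [DecidableEq V]

/-- `u` and `v` lie in the same supernode (connected component of `(V, F)`). -/
def sameSuper (G : CCInst V) (u v : V) : Prop :=
  Relation.ReflTransGen (fun a b => s(a, b) ∈ G.F) u v

/-- The (distinct) supernodes of `u` and `v` are hostile. -/
def hostileSuper (G : CCInst V) (u v : V) : Prop :=
  ¬ sameSuper G u v ∧ ∃ a b : V, sameSuper G u a ∧ sameSuper G v b ∧ s(a, b) ∈ G.H

/-- A clustering is feasible if it merges all friendly pairs and separates all hostile pairs. -/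
def Feasible (G : CCInst V) {L : Type*} (C : V → L) : Prop :=
  (∀ u v : V, s(u, v) ∈ G.F → C u = C v) ∧ ∀ u v : V, s(u, v) ∈ G.H → C u ≠ C v

/-- The cost of a clustering: positive edges cut plus negative edges not cut. -/
noncomputable def cost (G : CCInst V) {L : Type*} (C : V → L) : ℕ :=
  (G.Ep.filter fun e => ¬ (e.map C).IsDiag).card +
    (G.En.filter fun e => (e.map C).IsDiag).card

/-- `G` is in consistent form. -/
def ConsistentForm (G : CCInst V) : Prop :=
  (∀ u v : V, u ≠ v → sameSuper G u v → s(u, v) ∈ G.Ep) ∧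
    ∀ u v : V, hostileSuper G u v → s(u, v) ∈ G.En

/-- `G` is the consistent form of `G0`. -/
def IsConsistentFormOf (G G0 : CCInst V) : Prop :=
  G.F = G0.F ∧ G.H = G0.H ∧
    ∀ u v : V, u ≠ v →
      (sameSuper G0 u v → s(u, v) ∈ G.Ep) ∧
      (hostileSuper G0 u v → s(u, v) ∈ G.En) ∧
      (¬ sameSuper G0 u v → ¬ hostileSuper G0 u v → (s(u, v) ∈ G.Ep ↔ s(u, v) ∈ G0.Ep))

/-- `(e, f)` is a dangerous pair: `e = ab`, `f = cd` are positive edges with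
`s(b) = s(c)` and `(S(a), S(d)) ∈ H`. -/
def IsDangerousPair (G : CCInst V) (e f : Sym2 V) : Prop :=
  ∃ a b c d : V, e = s(a, b) ∧ f = s(c, d) ∧ e ∈ G.Ep ∧ f ∈ G.Ep ∧
    sameSuper G b c ∧ hostileSuper G a d

/-- The edge `e` occurs in the pair `p`. -/
def InPair (e : Sym2 V) (p : Sym2 V × Sym2 V) : Prop := e = p.1 ∨ e = p.2

/-- Every edge occurs in at most one member of `D`. -/
def EdgeDisjoint (D : Finset (Sym2 V × Sym2 V)) : Prop :=
  ∀ p ∈ D, ∀ q ∈ D, ∀ e : Sym2 V, InPair e p → InPair e q → p = q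

/-- `D` is an edge-disjoint set of dangerous pairs. -/
def DangerousFamily (G : CCInst V) (D : Finset (Sym2 V × Sym2 V)) : Prop :=
  (∀ p ∈ D, IsDangerousPair G p.1 p.2) ∧ EdgeDisjoint D

/-- `D` is a maximal edge-disjoint set of dangerous pairs. -/
def MaximalDangerous (G : CCInst V) (D : Finset (Sym2 V × Sym2 V)) : Prop :=
  DangerousFamily G D ∧
    ∀ e f : Sym2 V, IsDangerousPair G e f → EdgeDisjoint (insert (e, f) D) → (e, f) ∈ D

/-- `E_𝒟`: the set of edges occurring in members of `D`. -/
def EDset (D : Finset (Sym2 V × Sym2 V)) : Set (Sym2 V) :=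
  {e | ∃ p ∈ D, InPair e p}

/-- `f` is the partner edge `ρ(e)` of `e` in `D`. -/
def Partner (D : Finset (Sym2 V × Sym2 V)) (e f : Sym2 V) : Prop :=
  (e, f) ∈ D ∨ (f, e) ∈ D

/-- The induced edge value `x_{uv}` of an LP solution. -/
noncomputable def xval (G : CCInst V) (Xp Xn : Sym2 V → ℝ) (e : Sym2 V) : ℝ :=
  if e ∈ G.Ep then Xp e else Xn e

/-- The LP objective value `∑_{uv} x_{uv}`, summed over all unordered pairs of
distinct vertices. -/
noncomputable def lpObj (G : CCInst V) (Xp Xn : Sym2 V → ℝ) : ℝ :=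
  ∑ e ∈ Finset.univ.filter (fun e : Sym2 V => ¬ e.IsDiag), xval G Xp Xn e

/-- `(Xp, Xn)` is a feasible solution of the constrained covering LP (with
HEAP constraints coming from the dangerous pairs `D`).  The variables are
indexed by unordered pairs of vertices but must only depend on the pair of
supernodes of the endpoints. -/
structure IsLPSol (G : CCInst V) (D : Finset (Sym2 V × Sym2 V))
    (Xp Xn : Sym2 V → ℝ) : Prop where
  nonneg_p : ∀ e : Sym2 V, 0 ≤ Xp e
  nonneg_n : ∀ e : Sym2 V, 0 ≤ Xn e
  congr_p : ∀ u v u' v' : V, sameSuper G u u' → sameSuper G v v' →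
    Xp s(u, v) = Xp s(u', v')
  congr_n : ∀ u v u' v' : V, sameSuper G u u' → sameSuper G v v' →
    Xn s(u, v) = Xn s(u', v')
  same_p : ∀ u v : V, sameSuper G u v → Xp s(u, v) = 0
  same_n : ∀ u v : V, sameSuper G u v → Xn s(u, v) = 1
  host_n : ∀ u v : V, hostileSuper G u v → Xn s(u, v) = 0
  host_p : ∀ u v : V, hostileSuper G u v → Xp s(u, v) = 1
  tri_ppn : ∀ a b c : V, ¬ sameSuper G a b → ¬ sameSuper G b c → ¬ sameSuper G a c →
    1 ≤ Xp s(a, b) + Xp s(b, c) + Xn s(a, c)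
  tri_pnp : ∀ a b c : V, ¬ sameSuper G a b → ¬ sameSuper G b c → ¬ sameSuper G a c →
    1 ≤ Xp s(a, b) + Xn s(b, c) + Xp s(a, c)
  tri_npp : ∀ a b c : V, ¬ sameSuper G a b → ¬ sameSuper G b c → ¬ sameSuper G a c →
    1 ≤ Xn s(a, b) + Xp s(b, c) + Xp s(a, c)
  pair : ∀ u v : V, 1 ≤ Xp s(u, v) + Xn s(u, v)
  heap : ∀ a b c k l : V, s(a, b) ∈ G.Ep → s(b, c) ∈ G.Ep → s(a, c) ∈ G.Ep →
    ¬ sameSuper G a b → ¬ sameSuper G c b → s(a, c) ∈ EDset D →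
    Partner D s(a, c) s(k, l) →
    1 ≤ xval G Xp Xn s(a, b) + xval G Xp Xn s(b, c) + xval G Xp Xn s(k, l)

/-- `uv ∈ Ê⁺`: positive edges of the auxiliary graph `Ĝ`. -/
def hatPos (G : CCInst V) (D : Finset (Sym2 V × Sym2 V)) (Xp Xn : Sym2 V → ℝ)
    (u v : V) : Prop :=
  u ≠ v ∧ (sameSuper G u v ∨
    ((∃ a b : V, sameSuper G u a ∧ sameSuper G v b ∧ s(a, b) ∈ G.Ep ∧ s(a, b) ∉ EDset D) ∧
      Xp s(u, v) < min (Xn s(u, v)) (2 / 3)))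

/-- `uv ∈ Ê⁻`: negative edges of the auxiliary graph `Ĝ`. -/
def hatNeg (G : CCInst V) (D : Finset (Sym2 V × Sym2 V)) (Xp Xn : Sym2 V → ℝ)
    (u v : V) : Prop :=
  u ≠ v ∧ ¬ hatPos G D Xp Xn u v

/-- `Ê⁺` as a predicate on unordered pairs. -/
def hatPosE (G : CCInst V) (D : Finset (Sym2 V × Sym2 V)) (Xp Xn : Sym2 V → ℝ)
    (e : Sym2 V) : Prop :=
  ∃ u v : V, e = s(u, v) ∧ hatPos G D Xp Xn u v

/-- `Ê⁻` as a predicate on unordered pairs. -/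
def hatNegE (G : CCInst V) (D : Finset (Sym2 V × Sym2 V)) (Xp Xn : Sym2 V → ℝ)
    (e : Sym2 V) : Prop :=
  ¬ e.IsDiag ∧ ¬ hatPosE G D Xp Xn e

/-- `E^{+-} = E⁺ ∩ Ê⁻`. -/
noncomputable def Epm (G : CCInst V) (D : Finset (Sym2 V × Sym2 V)) (Xp Xn : Sym2 V → ℝ) :
    Finset (Sym2 V) :=
  G.Ep.filter fun e => hatNegE G D Xp Xn e

/-- The balanced edges `E^b ⊆ E^{+-}`. -/
noncomputable def Eb (G : CCInst V) (D : Finset (Sym2 V × Sym2 V)) (Xp Xn : Sym2 V → ℝ) :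
    Finset (Sym2 V) :=
  (Epm G D Xp Xn).filter fun e =>
    e ∈ EDset D ∧ ∀ f : Sym2 V, Partner D e f → f ∈ Epm G D Xp Xn

/-- The other flipped positive edges `E^o = E^{+-} \ E^b`. -/
noncomputable def Eo (G : CCInst V) (D : Finset (Sym2 V × Sym2 V)) (Xp Xn : Sym2 V → ℝ) :
    Finset (Sym2 V) :=
  Epm G D Xp Xn \ Eb G D Xp Xn

/-- A signed graph (given by its positive-edge relation `pos`) is pivot-safe for `G`. -/
def PivotSafe (G : CCInst V) (pos : V → V → Prop) : Prop :=
  (∀ i j : V, i ≠ j → sameSuper G i j →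
    pos i j ∧ ∀ k : V, k ≠ i → k ≠ j → (pos i k ↔ pos j k)) ∧
  ∀ i j : V, hostileSuper G i j → ¬ pos i j ∧ ∀ k : V, ¬ (pos i k ∧ pos j k)

/-- `PivotClust pos S C`: the assignment `C` (mapping every vertex of `S` to
the pivot of its cluster) is obtainable by running the pivot procedure on the
vertex set `S` of the signed graph whose positive edges are given by `pos`. -/
inductive PivotClust (pos : V → V → Prop) : Finset V → (V → V) → Prop where
  | nil (C : V → V) : PivotClust pos ∅ C
  | step (S : Finset V) (p : V) (C : V → V) (hp : p ∈ S)
      (h : PivotClust pos (S.filter fun v => ¬ (v = p ∨ pos p v)) C) :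
      PivotClust pos S (fun v => if v ∈ S ∧ (v = p ∨ pos p v) then p else C v)

/-- `T_p⁺` inside the vertex subset `W`. -/
noncomputable def Tpos (G : CCInst V) (D : Finset (Sym2 V × Sym2 V)) (Xp Xn : Sym2 V → ℝ)
    (W : Finset V) (p : V) : Finset (Sym2 V) :=
  Finset.univ.filter fun e : Sym2 V => ∃ u v : V, e = s(u, v) ∧ u ∈ W ∧ v ∈ W ∧
    hatPos G D Xp Xn u v ∧ hatPos G D Xp Xn p u ∧ hatNeg G D Xp Xn p v

/-- `T_p⁻` inside the vertex subset `W`. -/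
noncomputable def Tneg (G : CCInst V) (D : Finset (Sym2 V × Sym2 V)) (Xp Xn : Sym2 V → ℝ)
    (W : Finset V) (p : V) : Finset (Sym2 V) :=
  Finset.univ.filter fun e : Sym2 V => ∃ u v : V, e = s(u, v) ∧ u ∈ W ∧ v ∈ W ∧
    hatNeg G D Xp Xn u v ∧ hatPos G D Xp Xn p u ∧ hatPos G D Xp Xn p v

/-- `A_p⁻ = T_p⁻ \ E^b`. -/
noncomputable def Aneg (G : CCInst V) (D : Finset (Sym2 V × Sym2 V)) (Xp Xn : Sym2 V → ℝ)
    (W : Finset V) (p : V) : Finset (Sym2 V) :=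
  (Tneg G D Xp Xn W p).filter fun e => e ∉ Eb G D Xp Xn

/-- `B_p⁻ = T_p⁻ ∩ E^b`. -/
noncomputable def Bneg (G : CCInst V) (D : Finset (Sym2 V × Sym2 V)) (Xp Xn : Sym2 V → ℝ)
    (W : Finset V) (p : V) : Finset (Sym2 V) :=
  (Tneg G D Xp Xn W p).filter fun e => e ∈ Eb G D Xp Xn

/-- `(Xp, Xn)` is a feasible solution of the friendly covering LP (no hostile
constraints and no HEAP constraints). -/
structure IsFriendlyLPSol (G : CCInst V) (Xp Xn : Sym2 V → ℝ) : Prop where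
  nonneg_p : ∀ e : Sym2 V, 0 ≤ Xp e
  nonneg_n : ∀ e : Sym2 V, 0 ≤ Xn e
  congr_p : ∀ u v u' v' : V, sameSuper G u u' → sameSuper G v v' →
    Xp s(u, v) = Xp s(u', v')
  congr_n : ∀ u v u' v' : V, sameSuper G u u' → sameSuper G v v' →
    Xn s(u, v) = Xn s(u', v')
  same_p : ∀ u v : V, sameSuper G u v → Xp s(u, v) = 0
  same_n : ∀ u v : V, sameSuper G u v → Xn s(u, v) = 1
  tri_ppn : ∀ a b c : V, ¬ sameSuper G a b → ¬ sameSuper G b c → ¬ sameSuper G a c →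
    1 ≤ Xp s(a, b) + Xp s(b, c) + Xn s(a, c)
  tri_pnp : ∀ a b c : V, ¬ sameSuper G a b → ¬ sameSuper G b c → ¬ sameSuper G a c →
    1 ≤ Xp s(a, b) + Xn s(b, c) + Xp s(a, c)
  tri_npp : ∀ a b c : V, ¬ sameSuper G a b → ¬ sameSuper G b c → ¬ sameSuper G a c →
    1 ≤ Xn s(a, b) + Xp s(b, c) + Xp s(a, c)
  pair : ∀ u v : V, 1 ≤ Xp s(u, v) + Xn s(u, v)

/-- `(e, f)` is a dangerous triangle in a HostileCC instance: positive edges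
`e = ab`, `f = bc` with `ac ∈ H`. -/
def IsDangerousTriangle (G : CCInst V) (e f : Sym2 V) : Prop :=
  ∃ a b c : V, e = s(a, b) ∧ f = s(b, c) ∧ e ∈ G.Ep ∧ f ∈ G.Ep ∧ s(a, c) ∈ G.H

lemma sameSuper.symm {V : Type*} {G : CCInst V} {u v : V} (h : sameSuper G u v) :
    sameSuper G v u :=
  have : Std.Symm (fun a b : V => s(a, b) ∈ G.F) := ⟨fun x y hxy => by rwa [Sym2.eq_swap]⟩
  Relation.ReflTransGen.stdSymm.symm _ _ h

lemma sameSuper.trans {V : Type*} {G : CCInst V} {u v w : V} (h : sameSuper G u v)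
    (h' : sameSuper G v w) : sameSuper G u w :=
  Relation.ReflTransGen.trans h h'

lemma hostileSuper.symm {V : Type*} {G : CCInst V} {u v : V} (h : hostileSuper G u v) :
    hostileSuper G v u := by
  obtain ⟨hn, a, b, ha, hb, hH⟩ := h
  exact ⟨fun h => hn h.symm, b, a, hb, ha, by rwa [Sym2.eq_swap]⟩

lemma hostileSuper.congr_left {V : Type*} {G : CCInst V} {u u' v : V}
    (h : hostileSuper G u v) (hu : sameSuper G u u') : hostileSuper G u' v := by
  obtain ⟨hn, a, b, ha, hb, hH⟩ := h
  exact ⟨fun h => hn (hu.trans h), a, b, hu.symm.trans ha, hb, hH⟩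

lemma IsDangerousPair.symm {V : Type*} {G : CCInst V} {e f : Sym2 V}
    (h : IsDangerousPair G e f) : IsDangerousPair G f e := by
  obtain ⟨a, b, c, d, he, hf, hep, hfp, hbc, had⟩ := h
  exact ⟨d, c, b, a, hf.trans Sym2.eq_swap, he.trans Sym2.eq_swap, hfp, hep, hbc.symm, had.symm⟩

lemma hatPos.symm {V : Type*} {G : CCInst V} {D : Finset (Sym2 V × Sym2 V)}
    {Xp Xn : Sym2 V → ℝ} {u v : V} (h : hatPos G D Xp Xn u v) : hatPos G D Xp Xn v u := by
  obtain ⟨hne, h⟩ := h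
  refine ⟨hne.symm, ?_⟩
  rcases h with h | ⟨⟨a, b, ha, hb, hp, hD⟩, hx⟩
  · exact Or.inl h.symm
  · refine Or.inr ⟨⟨b, a, hb, ha, ?_, ?_⟩, ?_⟩
    · rwa [Sym2.eq_swap]
    · rwa [Sym2.eq_swap]
    · rwa [Sym2.eq_swap]

/-- Membership in `Ê⁺` depends only on the supernodes of the endpoints. -/
lemma hatPos.congr_left {V : Type*} [Fintype V] [DecidableEq V] {G : CCInst V}
    {D : Finset (Sym2 V × Sym2 V)} {Xp Xn : Sym2 V → ℝ} (hsol : IsLPSol G D Xp Xn) {u u' v : V}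
    (h : hatPos G D Xp Xn u v) (hu : sameSuper G u u') (hne : u' ≠ v) :
    hatPos G D Xp Xn u' v := by
  refine ⟨hne, ?_⟩
  rcases h.2 with h | ⟨⟨a, b, ha, hb, hp, hD⟩, hx⟩
  · exact Or.inl (hu.symm.trans h)
  · refine Or.inr ⟨⟨a, b, hu.symm.trans ha, hb, hp, hD⟩, ?_⟩
    rwa [← hsol.congr_p u v u' v hu .refl, ← hsol.congr_n u v u' v hu .refl]

/-- Maximality of `D`: a dangerous pair cannot consist of two edges outside `E_𝒟`. -/
lemma mem_EDset_of_dangerous {V : Type*} [Fintype V] [DecidableEq V] {G : CCInst V}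
    {D : Finset (Sym2 V × Sym2 V)} (hD : MaximalDangerous G D) {e f : Sym2 V}
    (h : IsDangerousPair G e f) : e ∈ EDset D ∨ f ∈ EDset D := by
  by_contra! hn
  obtain ⟨he, hf⟩ := hn
  have key : ∀ g, InPair g (e, f) → g ∉ EDset D := by
    rintro g (rfl | rfl)
    · exact he
    · exact hf
  refine he ⟨(e, f), hD.2 e f h ?_, Or.inl rfl⟩
  intro p hp q hq g hgp hgq
  rw [Finset.mem_insert] at hp hq
  rcases hp with rfl | hp
  · rcases hq with rfl | hq
    · rfl
    · exact absurd ⟨q, hq, hgq⟩ (key g hgp)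
  · rcases hq with rfl | hq
    · exact absurd ⟨p, hp, hgp⟩ (key g hgq)
    · exact hD.1.2 p hp q hq g hgp hgq

/-- The edges of a dangerous pair form a path between hostile supernodes, so together they carry
`X⁺`-weight at least one. Consistent form rules out that either edge lies inside a supernode,
since the other one would then join hostile supernodes while being positive. -/
lemma one_le_add_of_dangerous {V : Type*} [Fintype V] [DecidableEq V] {G : CCInst V}
    {D : Finset (Sym2 V × Sym2 V)} {Xp Xn : Sym2 V → ℝ} (hG : ConsistentForm G)
    (hsol : IsLPSol G D Xp Xn) {e f : Sym2 V} (h : IsDangerousPair G e f) :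
    1 ≤ Xp e + Xp f ∧ ∀ u v, f = s(u, v) → ¬ sameSuper G u v := by
  obtain ⟨a, b, c, d, rfl, rfl, hep, hfp, hbc, had⟩ := h
  have hcd : ¬ sameSuper G c d := fun hs =>
    ((G.mem_Ep_iff _).1 hep).2
      (hG.2 _ _ (had.symm.congr_left (hbc.trans hs).symm).symm)
  have hab : ¬ sameSuper G a b := fun hs =>
    ((G.mem_Ep_iff _).1 hfp).2 (hG.2 _ _ (had.congr_left (hs.trans hbc)))
  constructor
  · have h1 := hsol.tri_ppn a b d hab (fun hs => hcd (hbc.symm.trans hs)) had.1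
    rw [hsol.host_n _ _ had, hsol.congr_p b d c d hbc .refl] at h1
    linarith
  · intro u v huv hs
    rcases Sym2.eq_iff.1 huv with ⟨rfl, rfl⟩ | ⟨rfl, rfl⟩
    · exact hcd hs
    · exact hcd hs.symm

/-- A pair of `Ê⁺` between distinct supernodes has `X⁺ ≤ x`, and `x > 1/2` if it is negative
in `G`. -/
lemma hatPos.xval_bounds {V : Type*} [Fintype V] [DecidableEq V] {G : CCInst V}
    {D : Finset (Sym2 V × Sym2 V)} {Xp Xn : Sym2 V → ℝ} (hsol : IsLPSol G D Xp Xn) {u v : V}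
    (h : hatPos G D Xp Xn u v) (hs : ¬ sameSuper G u v) :
    Xp s(u, v) ≤ xval G Xp Xn s(u, v) ∧
      (s(u, v) ∉ G.Ep → 1 / 2 < xval G Xp Xn s(u, v)) := by
  obtain ⟨-, hx⟩ := h.2.resolve_left hs
  have hlt := (lt_min_iff.1 hx).1
  have hpair := hsol.pair u v
  unfold xval
  constructor
  · split_ifs
    · exact le_rfl
    · exact hlt.le
  · intro hn
    rw [if_neg hn]
    linarith

/-- The case of three positive edges on distinct supernodes. If `X⁺_{ac}` is below the threshold,
then `ac ∈ E_𝒟` and its partner lies in `Ê⁺`; the HEAP constraint and `one_le_add_of_dangerous` then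
combine to the bound. -/
lemma two_thirds_le {V : Type*} [Fintype V] [DecidableEq V] {G : CCInst V}
    {D : Finset (Sym2 V × Sym2 V)} {Xp Xn : Sym2 V → ℝ} (hG : ConsistentForm G)
    (hD : MaximalDangerous G D) (hsol : IsLPSol G D Xp Xn) {a b c : V}
    (hac : hatNeg G D Xp Xn a c)
    (sab : ¬ sameSuper G a b) (sbc : ¬ sameSuper G b c) (sac : ¬ sameSuper G a c)
    (pab : s(a, b) ∈ G.Ep) (pbc : s(b, c) ∈ G.Ep) (pac : s(a, c) ∈ G.Ep)
    (hEb : s(a, c) ∉ Eb G D Xp Xn) :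
    2 / 3 ≤ Xp s(a, b) + Xp s(b, c) + Xp s(a, c) := by
  have nab := hsol.nonneg_p s(a, b)
  have nbc := hsol.nonneg_p s(b, c)
  by_cases hx : Xp s(a, c) < min (Xn s(a, c)) (2 / 3)
  · have hED : s(a, c) ∈ EDset D := by
      by_contra hn
      exact hac.2 ⟨hac.1, Or.inr ⟨⟨a, c, .refl, .refl, pac, hn⟩, hx⟩⟩
    have hpm : s(a, c) ∈ Epm G D Xp Xn := by
      refine Finset.mem_filter.2 ⟨pac, ((G.mem_Ep_iff _).1 pac).1, ?_⟩
      rintro ⟨u, v, huv, h⟩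
      rcases Sym2.eq_iff.1 huv with ⟨rfl, rfl⟩ | ⟨rfl, rfl⟩
      · exact hac.2 h
      · exact hac.2 h.symm
    have hf : ∃ f, Partner D s(a, c) f ∧ f ∉ Epm G D Xp Xn := by
      by_contra! hn
      exact hEb (Finset.mem_filter.2 ⟨hpm, hED, hn⟩)
    obtain ⟨f, hpf, hfn⟩ := hf
    have hdan : IsDangerousPair G s(a, c) f := by
      rcases hpf with h | h
      · exact hD.1.1 _ h
      · exact (hD.1.1 _ h).symm
    have hfp : f ∈ G.Ep := by
      obtain ⟨_, _, _, _, _, _, _, h, _⟩ := hdan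
      exact h
    have hfE : hatPosE G D Xp Xn f := by
      by_contra hn
      exact hfn (Finset.mem_filter.2 ⟨hfp, ((G.mem_Ep_iff _).1 hfp).1, hn⟩)
    obtain ⟨k, l, rfl, hkl⟩ := hfE
    obtain ⟨h1, hs⟩ := one_le_add_of_dangerous hG hsol hdan
    obtain ⟨-, hlt⟩ := hkl.2.resolve_left (hs k l rfl)
    have h23 := (lt_min_iff.1 hlt).2
    have hheap := hsol.heap a b c k l pab pbc pac sab (fun h => sbc h.symm) hED hpf
    simp only [xval, if_pos pab, if_pos pbc, if_pos hfp] at hheap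
    linarith
  · rcases min_le_iff.1 (not_lt.1 hx) with h | h
    · have := hsol.tri_ppn a b c sab sbc sac
      linarith
    · linarith

/-- Lemma 3.6.  If `abc` is a bad triangle of `Ĝ`, then the
supernodes `S(a), S(b), S(c)` are pairwise distinct; moreover, if `ac ∉ E^b`
(a type-A bad triangle), then
`𝟙(ab ∈ E⁺) + 𝟙(bc ∈ E⁺) + 𝟙(ac ∈ E⁻) ≤ 3 (x_{ab} + x_{bc} + x_{ac})`. -/
theorem stmt10 {V : Type*} [Fintype V] [DecidableEq V] (G : CCInst V)
    (D : Finset (Sym2 V × Sym2 V)) (Xp Xn : Sym2 V → ℝ)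
    (hG : ConsistentForm G) (hD : MaximalDangerous G D)
    (hsol : IsLPSol G D Xp Xn)
    (a b c : V)
    (hab : hatPos G D Xp Xn a b) (hbc : hatPos G D Xp Xn b c)
    (hac : hatNeg G D Xp Xn a c) :
    (¬ sameSuper G a b ∧ ¬ sameSuper G b c ∧ ¬ sameSuper G a c) ∧
      (s(a, c) ∉ Eb G D Xp Xn →
        (if s(a, b) ∈ G.Ep then (1 : ℝ) else 0) +
            (if s(b, c) ∈ G.Ep then (1 : ℝ) else 0) +
            (if s(a, c) ∈ G.En then (1 : ℝ) else 0) ≤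
          3 * (xval G Xp Xn s(a, b) + xval G Xp Xn s(b, c) + xval G Xp Xn s(a, c))) := by
  have sab : ¬ sameSuper G a b := fun h =>
    hac.2 (hbc.congr_left hsol h.symm hac.1)
  have sbc : ¬ sameSuper G b c := fun h =>
    hac.2 (hab.symm.congr_left hsol h hac.1.symm).symm
  have sac : ¬ sameSuper G a c := fun h => hac.2 ⟨hac.1, Or.inl h⟩
  refine ⟨⟨sab, sbc, sac⟩, fun hEb => ?_⟩
  obtain ⟨xab, yab⟩ := hab.xval_bounds hsol sab
  obtain ⟨xbc, ybc⟩ := hbc.xval_bounds hsol sbc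
  have nab := hsol.nonneg_p s(a, b)
  have nbc := hsol.nonneg_p s(b, c)
  by_cases pac : s(a, c) ∈ G.Ep
  · have nac := hsol.nonneg_p s(a, c)
    have xac : xval G Xp Xn s(a, c) = Xp s(a, c) := if_pos pac
    rw [if_neg ((G.mem_Ep_iff _).1 pac).2, xac]
    by_cases pab : s(a, b) ∈ G.Ep
    · by_cases pbc : s(b, c) ∈ G.Ep
      · have := two_thirds_le hG hD hsol hac sab sbc sac pab pbc pac hEb
        rw [if_pos pab, if_pos pbc]
        linarith
      · have := ybc pbc
        rw [if_pos pab, if_neg pbc]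
        linarith
    · have := yab pab
      rw [if_neg pab]
      split_ifs <;> linarith
  · have xac : xval G Xp Xn s(a, c) = Xn s(a, c) := if_neg pac
    have := hsol.tri_ppn a b c sab sbc sac
    rw [xac]
    split_ifs <;> linarith

end CCC
end

section
/- Let G be a ConstrainedCC instance and 𝒟 an edge-disjoint set of dangerous pairs. Then every feasible clustering of G has cost at least |𝒟|. -/
/-!
A feasible clustering is constant on supernodes and separates hostile supernodes, so it must cut at
least one edge of every dangerous pair (`IsDangerousPair.exists_cut`). Choosing one cut edge from
each member of `D` gives an injective map, by edge-disjointness, from `D` into the set of cut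
positive edges, whose cardinality is one of the two summands of the cost.
-/

open scoped Classical

namespace CCC

variable {V : Type*} [Fintype V] [DecidableEq V]

theorem Feasible.eq_of_sameSuper {V : Type*} {L : Type*} {G : CCInst V} {C : V → L}
    (hC : Feasible G C) {u v : V} (h : sameSuper G u v) : C u = C v := by
  induction h with
  | refl => rfl
  | tail _ h2 ih => exact ih.trans (hC.1 _ _ h2)

theorem Feasible.ne_of_hostileSuper {V : Type*} {L : Type*} {G : CCInst V} {C : V → L}
    (hC : Feasible G C) {u v : V} (h : hostileSuper G u v) : C u ≠ C v := by
  obtain ⟨-, a, b, ha, hb, hab⟩ := h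
  rw [hC.eq_of_sameSuper ha, hC.eq_of_sameSuper hb]
  exact hC.2 a b hab

/-- If both edges `ab`, `cd` of a dangerous pair were uncut, then `C a = C b = C c = C d`,
although the supernodes of `a` and `d` are hostile. -/
theorem IsDangerousPair.exists_cut {V : Type*} {L : Type*} {G : CCInst V} {C : V → L}
    (hC : Feasible G C) {p : Sym2 V × Sym2 V} (h : IsDangerousPair G p.1 p.2) :
    ∃ e, InPair e p ∧ e ∈ G.Ep ∧ ¬ (e.map C).IsDiag := by
  obtain ⟨a, b, c, d, he, hf, hep, hfp, hbc, had⟩ := h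
  by_cases hab : (p.1.map C).IsDiag
  · refine ⟨p.2, Or.inr rfl, hfp, fun hcd => hC.ne_of_hostileSuper had ?_⟩
    rw [he, Sym2.map_mk, Sym2.mk_isDiag_iff] at hab
    rw [hf, Sym2.map_mk, Sym2.mk_isDiag_iff] at hcd
    exact (hab.trans (hC.eq_of_sameSuper hbc)).trans hcd
  · exact ⟨p.1, Or.inl rfl, hep, hab⟩

/-- If `D` is an edge-disjoint set of dangerous pairs, then
every feasible clustering has cost at least `|D|`. -/
theorem stmt12 {V : Type*} [Fintype V] [DecidableEq V] {L : Type*} (G : CCInst V)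
    (D : Finset (Sym2 V × Sym2 V)) (hD : DangerousFamily G D)
    (C : V → L) (hC : Feasible G C) :
    D.card ≤ cost G C := by
  choose g hin hpos hcut using fun p (hp : p ∈ D) => (hD.1 p hp).exists_cut hC
  refine le_trans ?_ (Nat.le_add_right _ _)
  refine Finset.card_le_card_of_injOn (fun p => if hp : p ∈ D then g p hp else p.1) ?_ ?_
  · intro p hp
    have hp' : p ∈ D := hp
    simp [hp', hpos p hp', hcut p hp']
  · intro p hp q hq hpq
    have hp' : p ∈ D := hp
    have hq' : q ∈ D := hq
    simp only [hp', hq', dif_pos] at hpq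
    exact hD.2 p hp' q hq' (g p hp') (hin p hp') (hpq ▸ hin q hq')

end CCC
end
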